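/- The function d(p,q) = √(I(p,q)) is a metric on the positive reals: for all p, q, r > 0, (i) I(p,q) ≥ 0, (ii) I(p,q) = 0 if and only if p = q, (iii) I(p,q) = I(q,p), and (iv) √(I(p,q)) ≤ √(I(p,r)) + √(I(r,q)). -/

import Mathlib

/-- Jensen–Shannon divergence (pointwise). -/
noncomputable def Idiv (p q : ℝ) : ℝ :=
  (p / 2) * Real.log (2 * p / (p + q)) + (q / 2) * Real.log (2 * q / (p + q))

/-!
The kernel `(s + u)⁻¹ = ∫₀^∞ e^{-st} e^{-ut} dt` is the Gram kernel of the exponentials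
`e_s(t) = e^{-st}` in `L²(0, ∞)`. Integrating it twice gives
`4 I(p, q) = ∫_p^q ∫_p^q (s + u)⁻¹ du ds = ‖∫_p^q e_s ds‖²`, so `p ↦ (1/2) ∫_1^p e_s ds` embeds
the positive reals with the distance `√I` isometrically into `L²(0, ∞)`, whence the triangle
inequality. Definiteness is the strict convexity of `x log x`, whose midpoint Jensen gap is `I`.
-/

open Real Set MeasureTheory
open scoped RealInnerProductSpace

section JensenGap

theorem Idiv_comm (p q : ℝ) : Idiv p q = Idiv q p := by
  rw [Idiv, Idiv, add_comm q p, add_comm]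

theorem Idiv_self (p : ℝ) : Idiv p p = 0 := by
  rcases eq_or_ne p 0 with rfl | hp
  · simp [Idiv]
  · simp [Idiv, ← two_mul, hp]

variable {p q : ℝ}

theorem Idiv_eq_midpoint_sub (hp : 0 < p) (hq : 0 < q) :
    Idiv p q = (p * log p + q * log q) / 2 - (p + q) / 2 * log ((p + q) / 2) := by
  have log_ratio {x : ℝ} (hx : 0 < x) : log (2 * x / (p + q)) = log x - log ((p + q) / 2) := by
    rw [← log_div hx.ne' (by positivity), div_div_eq_mul_div, mul_comm]
  rw [Idiv, log_ratio hp, log_ratio hq]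
  ring

theorem Idiv_pos_of_ne (hp : 0 < p) (hq : 0 < q) (hpq : p ≠ q) : 0 < Idiv p q := by
  have hconv := strictConvexOn_mul_log.2 hp.le hq.le hpq
    one_half_pos one_half_pos (add_halves 1)
  have hmid : 1 / 2 * p + 1 / 2 * q = (p + q) / 2 := by ring
  simp only [smul_eq_mul, hmid] at hconv
  rw [Idiv_eq_midpoint_sub hp hq]
  linarith

theorem Idiv_nonneg (hp : 0 < p) (hq : 0 < q) : 0 ≤ Idiv p q := by
  rcases eq_or_ne p q with rfl | hpq
  · exact (Idiv_self p).ge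
  · exact (Idiv_pos_of_ne hp hq hpq).le

theorem Idiv_eq_zero_iff (hp : 0 < p) (hq : 0 < q) : Idiv p q = 0 ↔ p = q := by
  refine ⟨fun h ↦ ?_, fun h ↦ h ▸ Idiv_self p⟩
  by_contra hpq
  exact (Idiv_pos_of_ne hp hq hpq).ne' h

end JensenGap

section GramKernel

variable {E : Type*} [NormedAddCommGroup E] [InnerProductSpace ℝ E]

theorem continuousOn_of_continuousOn_inner {X : Type*} [TopologicalSpace X] {f : X → E}
    {S : Set X} (hf : ContinuousOn (fun z : X × X ↦ ⟪f z.1, f z.2⟫) (S ×ˢ S)) :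
    ContinuousOn f S := by
  intro x hx
  have hdiag : ContinuousOn (fun y ↦ ⟪f y, f y⟫) S :=
    hf.comp (f := fun y ↦ (y, y)) (by fun_prop) fun y hy ↦ ⟨hy, hy⟩
  have hslice : ContinuousOn (fun y ↦ ⟪f y, f x⟫) S :=
    hf.comp (f := fun y ↦ (y, x)) (by fun_prop) fun y hy ↦ ⟨hy, hx⟩
  have hdist : ContinuousOn (fun y ↦ √(⟪f y, f y⟫ - 2 * ⟪f y, f x⟫ + ⟪f x, f x⟫)) S := by
    fun_prop
  rw [ContinuousWithinAt, tendsto_iff_dist_tendsto_zero]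
  convert (hdist x hx).tendsto using 2 with y
  · rw [dist_eq_norm, ← sqrt_sq (norm_nonneg (f y - f x)), norm_sub_sq_real,
      real_inner_self_eq_norm_sq, real_inner_self_eq_norm_sq]
  · rw [eq_comm, sqrt_eq_zero']
    exact (by ring : _ = (0 : ℝ)).le

theorem norm_intervalIntegral_sq_eq_integral_inner [CompleteSpace E] {f : ℝ → E} {a b : ℝ}
    {μ : Measure ℝ} (hf : IntervalIntegrable f μ a b) :
    ‖∫ s in a..b, f s ∂μ‖ ^ 2 = ∫ s in a..b, ∫ u in a..b, ⟪f s, f u⟫ ∂μ ∂μ := by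
  have inner_integral (v : E) : ⟪v, ∫ u in a..b, f u ∂μ⟫ = ∫ u in a..b, ⟪v, f u⟫ ∂μ :=
    ((innerSL ℝ v).intervalIntegral_comp_comm hf).symm
  simp_rw [← inner_integral]
  rw [← real_inner_self_eq_norm_sq, inner_integral]
  simp only [real_inner_comm]

end GramKernel

section CauchyKernel

variable {a b : ℝ}

theorem integral_inv_add_of_pos {s : ℝ} (ha : 0 < s + a) (hb : 0 < s + b) :
    ∫ u in a..b, (s + u)⁻¹ = log (s + b) - log (s + a) := by
  rw [intervalIntegral.integral_comp_add_left (fun x ↦ x⁻¹), integral_inv_of_pos ha hb,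
    log_div hb.ne' ha.ne']

theorem integral_log_add (a b c : ℝ) :
    ∫ s in a..b, log (s + c) =
      (b + c) * log (b + c) - (a + c) * log (a + c) - (b - a) := by
  rw [intervalIntegral.integral_comp_add_right, integral_log]
  ring

theorem integral_integral_inv_add (ha : 0 < a) (hb : 0 < b) :
    ∫ s in a..b, ∫ u in a..b, (s + u)⁻¹ = 4 * Idiv a b := by
  have hpos : uIcc a b ⊆ Ioi 0 := ordConnected_Ioi.uIcc_subset ha hb
  have log_integrable (c : ℝ) : IntervalIntegrable (fun s ↦ log (s + c)) volume a b := by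
    simpa using
      (intervalIntegral.intervalIntegrable_log' (a := a + c) (b := b + c)).comp_add_right c
  calc ∫ s in a..b, ∫ u in a..b, (s + u)⁻¹
    _ = ∫ s in a..b, (log (s + b) - log (s + a)) :=
        intervalIntegral.integral_congr fun s hs ↦ integral_inv_add_of_pos
          (add_pos (hpos hs) ha) (add_pos (hpos hs) hb)
    _ = 2 * a * log (2 * a) + 2 * b * log (2 * b) - 2 * (a + b) * log (a + b) := by
        rw [intervalIntegral.integral_sub (log_integrable b) (log_integrable a),
          integral_log_add, integral_log_add, add_comm b a, ← two_mul, ← two_mul]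
        ring
    _ = 4 * Idiv a b := by
        rw [Idiv, log_div (by positivity) (by positivity),
          log_div (by positivity) (by positivity)]
        ring

end CauchyKernel

section Embedding

theorem memLp_exp_neg_mul {s : ℝ} (hs : 0 < s) :
    MemLp (fun t ↦ exp (-s * t)) 2 (volume.restrict (Ioi 0)) := by
  rw [memLp_two_iff_integrable_sq (by fun_prop)]
  simp_rw [← exp_nat_mul, ← mul_assoc]
  exact integrableOn_exp_mul_Ioi (by push_cast; linarith) 0

/-- The exponential `t ↦ e^{-st}` as a vector of `L²(0, ∞)`. It is square integrable only for
`0 < s`; the value `0` at other `s` is a junk value. -/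
noncomputable def expLp (s : ℝ) : Lp ℝ 2 (volume.restrict (Ioi (0 : ℝ))) :=
  if hs : 0 < s then (memLp_exp_neg_mul hs).toLp else 0

theorem inner_expLp {s u : ℝ} (hs : 0 < s) (hu : 0 < u) :
    ⟪expLp s, expLp u⟫ = (s + u)⁻¹ := by
  have h_ae : (fun t ↦ ⟪expLp s t, expLp u t⟫) =ᵐ[volume.restrict (Ioi 0)]
      fun t ↦ exp (-(s + u) * t) := by
    rw [expLp, expLp, dif_pos hs, dif_pos hu]
    filter_upwards [(memLp_exp_neg_mul hs).coeFn_toLp, (memLp_exp_neg_mul hu).coeFn_toLp]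
      with t hst hut
    rw [hst, hut, RCLike.inner_apply, conj_trivial, ← exp_add]
    ring_nf
  rw [L2.inner_def, integral_congr_ae h_ae, integral_exp_mul_Ioi (by linarith),
    mul_zero, exp_zero, neg_div_neg_eq, one_div]

theorem continuousOn_expLp : ContinuousOn expLp (Ioi 0) := by
  refine continuousOn_of_continuousOn_inner (ContinuousOn.congr
    (f := fun z : ℝ × ℝ ↦ (z.1 + z.2)⁻¹) ?_ fun z hz ↦ inner_expLp hz.1 hz.2)
  exact ContinuousOn.inv₀ (by fun_prop) fun z hz ↦ (add_pos hz.1 hz.2).ne'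

variable {a b : ℝ}

theorem intervalIntegrable_expLp (ha : 0 < a) (hb : 0 < b) :
    IntervalIntegrable expLp volume a b :=
  (continuousOn_expLp.mono (ordConnected_Ioi.uIcc_subset ha hb)).intervalIntegrable

theorem norm_integral_expLp_sq (ha : 0 < a) (hb : 0 < b) :
    ‖∫ s in a..b, expLp s‖ ^ 2 = 4 * Idiv a b := by
  have hpos : uIcc a b ⊆ Ioi 0 := ordConnected_Ioi.uIcc_subset ha hb
  rw [norm_intervalIntegral_sq_eq_integral_inner (intervalIntegrable_expLp ha hb),
    ← integral_integral_inv_add ha hb]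
  exact intervalIntegral.integral_congr fun s hs ↦ intervalIntegral.integral_congr fun u hu ↦
    inner_expLp (hpos hs) (hpos hu)

/-- The isometric embedding of the positive reals with the distance `√I` into `L²(0, ∞)`; the base
point `1` is arbitrary. -/
noncomputable def idivEmbedding (p : ℝ) : Lp ℝ 2 (volume.restrict (Ioi (0 : ℝ))) :=
  (1 / 2 : ℝ) • ∫ s in (1 : ℝ)..p, expLp s

theorem dist_idivEmbedding (ha : 0 < a) (hb : 0 < b) :
    dist (idivEmbedding a) (idivEmbedding b) = √(Idiv a b) := by
  have hsub : idivEmbedding b - idivEmbedding a = (1 / 2 : ℝ) • ∫ s in a..b, expLp s := by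
    rw [idivEmbedding, idivEmbedding, ← smul_sub, intervalIntegral.integral_interval_sub_left
      (intervalIntegrable_expLp one_pos hb) (intervalIntegrable_expLp one_pos ha)]
  rw [dist_comm, dist_eq_norm, hsub, eq_comm, sqrt_eq_iff_eq_sq (Idiv_nonneg ha hb)
    (norm_nonneg _), norm_smul, mul_pow, norm_integral_expLp_sq ha hb,
    norm_of_nonneg one_half_pos.le]
  ring

end Embedding

/-- `√(I(p,q))` is a metric on the positive reals. -/
theorem sqrt_I_is_metric :
    (∀ p q : ℝ, 0 < p → 0 < q → 0 ≤ Idiv p q) ∧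
    (∀ p q : ℝ, 0 < p → 0 < q → (Idiv p q = 0 ↔ p = q)) ∧
    (∀ p q : ℝ, 0 < p → 0 < q → Idiv p q = Idiv q p) ∧
    (∀ p q r : ℝ, 0 < p → 0 < q → 0 < r →
      Real.sqrt (Idiv p q) ≤ Real.sqrt (Idiv p r) + Real.sqrt (Idiv r q)) := by
  refine ⟨fun _ _ ↦ Idiv_nonneg, fun _ _ ↦ Idiv_eq_zero_iff, fun p q _ _ ↦ Idiv_comm p q,
    fun p q r hp hq hr ↦ ?_⟩
  rw [← dist_idivEmbedding hp hq, ← dist_idivEmbedding hp hr, ← dist_idivEmbedding hr hq]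
  exact dist_triangle _ _ _
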